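/- Let ζ be the Riemann zeta function and define w : ℕ → ℂ by w(k) = 1/ζ(k) for k ≥ 2, w(1) = 0, and w(0) = 1/ζ(0) = −2 (the values of the meromorphic function 1/ζ at the non-negative integers, with 1/ζ(1) = 0 since ζ has a pole at 1). Then for every s ∈ ℂ with Re s > 1, the Newton series ∑_{n=0}^∞ (∑_{k=0}^n P_k(n)·w(k))·P_n(s) converges and its sum equals 1/ζ(s). -/

import Mathlib

open Filter Finset Topology

/-- The `n`-th Pochhammer–Newton polynomial `P_n(α) = ((-1)^n / n!) ∏_{m=0}^{n-1} (α - m)`. -/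
noncomputable def pochNewton (n : ℕ) (α : ℂ) : ℂ :=
  ((-1 : ℂ) ^ n / (n.factorial : ℂ)) * ∏ m ∈ Finset.range n, (α - (m : ℂ))

/-- The values of `1/ζ` at the non-negative integers, with `w(1) = 0` (since `ζ` has a pole
at `1`); in particular `w(0) = 1/ζ(0) = -2`. -/
noncomputable def recipZetaValue (k : ℕ) : ℂ :=
  if k = 1 then 0 else (riemannZeta k)⁻¹

/-!
Expand `1/ζ(s) = ∑ μ(m) m ^ (-s)` and `m ^ (-s) = (1 - (1 - m⁻¹)) ^ s = ∑ (1 - m⁻¹) ^ n P_n(s)`,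
then interchange the two sums. Directly this is not allowed: the inner sum would have coefficients
`∑ μ(m) (1 - m⁻¹) ^ n`, which diverge. But `∑ P_k(n) P_n(s) = 0` whenever `k < Re s`, so the terms
of low degree can be removed from the binomial expansion
`(1 - m⁻¹) ^ n = ∑ P_k(n) m ^ (-k)` for free. The remainder after the terms of degree at most `p`
is `O((n / m) ^ p)`, and `P_n(s) = O(n ^ (-Re s - 1))` by Euler's limit formula for `Γ(-s)`; hence
the truncated double series converges absolutely if `∑ |μ(m)| m ^ (-p)` converges and `p < Re s`.
The same argument applies to every Dirichlet series, and it leaves the values of the interpolated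
sequence at all `k ≤ p` arbitrary.
-/

open Asymptotics

section PochNewton

theorem pochNewton_eq_neg_one_pow_mul_choose (n : ℕ) (s : ℂ) :
    pochNewton n s = (-1) ^ n * Ring.choose s n := by
  have h : (descPochhammer ℤ n).smeval s = ∏ m ∈ range n, (s - m) := by
    rw [← Polynomial.aeval_eq_smeval, Polynomial.aeval_def, Polynomial.eval₂_eq_eval_map,
      descPochhammer_map, descPochhammer_eval_eq_prod_range]
  rw [pochNewton, Ring.choose_eq_smul, h, smul_eq_mul]
  ring

@[simp]
theorem pochNewton_zero (s : ℂ) : pochNewton 0 s = 1 := by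
  simp [pochNewton]

theorem pochNewton_natCast (k n : ℕ) : pochNewton k n = (-1) ^ k * n.choose k := by
  rw [pochNewton_eq_neg_one_pow_mul_choose, Ring.choose_natCast]

theorem pochNewton_natCast_of_lt {k n : ℕ} (h : n < k) : pochNewton k n = 0 := by
  simp [pochNewton_natCast, Nat.choose_eq_zero_of_lt h]

theorem pochNewton_succ_add_one (n : ℕ) (s : ℂ) :
    pochNewton (n + 1) (s + 1) = pochNewton (n + 1) s - pochNewton n s := by
  simp only [pochNewton_eq_neg_one_pow_mul_choose, Ring.choose_succ_succ]
  ring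

theorem pochNewton_natCast_add_mul_pochNewton (k j : ℕ) (s : ℂ) :
    pochNewton k ((j + k : ℕ) : ℂ) * pochNewton (j + k) s =
      (-1) ^ k * pochNewton k s * pochNewton j (s - k) := by
  have h := Ring.choose_smul_choose s (Nat.le_add_left k j)
  rw [nsmul_eq_mul, Nat.add_sub_cancel] at h
  rw [pochNewton_natCast]
  simp only [pochNewton_eq_neg_one_pow_mul_choose, pow_add]
  linear_combination (-1) ^ k * (-1) ^ k * (-1) ^ j * h

theorem sum_range_pochNewton (n : ℕ) (s : ℂ) :
    ∑ k ∈ range (n + 1), pochNewton k s = pochNewton n (s - 1) := by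
  induction n with
  | zero => simp
  | succ n ih =>
    have pascal := pochNewton_succ_add_one n (s - 1)
    rw [sub_add_cancel] at pascal
    rw [sum_range_succ, ih, pascal, add_sub_cancel]

theorem sum_range_pochNewton_natCast_mul (f : ℕ → ℂ) (d n : ℕ) :
    ∑ k ∈ range (n + 1), pochNewton k n * f k =
      ∑ k ∈ range d, pochNewton k n * f k + ∑ k ∈ Ico d (n + 1), pochNewton k n * f k := by
  rcases le_total d (n + 1) with h | h
  · exact (sum_range_add_sum_Ico _ h).symm
  · rw [Ico_eq_empty_of_le h, sum_empty, add_zero, ← sum_range_add_sum_Ico _ h, left_eq_add]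
    refine sum_eq_zero fun k hk ↦ ?_
    rw [pochNewton_natCast_of_lt (mem_Ico.1 hk).1, zero_mul]

theorem one_sub_pow_eq_sum_pochNewton (x : ℂ) (n : ℕ) :
    (1 - x) ^ n = ∑ k ∈ range (n + 1), pochNewton k n * x ^ k := by
  rw [sub_eq_neg_add, add_pow]
  refine sum_congr rfl fun k _ ↦ ?_
  rw [pochNewton_natCast, neg_pow, one_pow]
  ring

theorem hasSum_pow_mul_pochNewton {x : ℂ} (hx : ‖x‖ < 1) (s : ℂ) :
    HasSum (fun n ↦ x ^ n * pochNewton n s) ((1 - x) ^ s) := by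
  have hball : -x ∈ Metric.eball 0 1 := by simpa [← ofReal_norm] using hx
  have h := (Complex.one_add_cpow_hasFPowerSeriesOnBall_zero (a := s)).hasSum hball
  convert! h using 1
  · ext n
    rw [binomialSeries_apply, List.ofFn_const, List.prod_replicate, smul_eq_mul,
      pochNewton_eq_neg_one_pow_mul_choose, neg_pow]
    ring
  · rw [zero_add, ← sub_eq_add_neg]

theorem inv_GammaSeq_neg (s : ℂ) (n : ℕ) :
    (Complex.GammaSeq (-s) n)⁻¹ = (n : ℂ) ^ s * ((n - s) * pochNewton n s) := by
  have h : ∏ j ∈ range (n + 1), (-s + j) = (-1) ^ n * (n - s) * ∏ j ∈ range n, (s - j) := by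
    have hneg : ∀ j ∈ range n, -s + j = -(s - j) := fun j _ ↦ by ring
    rw [prod_range_succ, prod_congr rfl hneg, prod_neg, card_range]
    ring
  rw [Complex.GammaSeq, h, inv_div, Complex.cpow_neg, pochNewton, div_eq_mul_inv, mul_inv, inv_inv]
  ring

theorem pochNewton_eq_cpow_mul_inv_GammaSeq {n : ℕ} {s : ℂ} (hn : n ≠ 0) (hs : s ≠ n) :
    pochNewton n s = (n : ℂ) ^ (-s) * (n - s : ℂ)⁻¹ * (Complex.GammaSeq (-s) n)⁻¹ := by
  have hcpow : (n : ℂ) ^ s ≠ 0 := by simp [Complex.cpow_eq_zero_iff, hn]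
  have hsub : (n - s : ℂ) ≠ 0 := sub_ne_zero.2 hs.symm
  rw [inv_GammaSeq_neg, Complex.cpow_neg]
  field_simp

theorem isBigO_inv_natCast_sub (s : ℂ) :
    (fun n : ℕ ↦ (n - s : ℂ)⁻¹) =O[atTop] fun n : ℕ ↦ (n : ℂ)⁻¹ := by
  have hconst : (fun _ : ℕ ↦ s) =o[atTop] fun n : ℕ ↦ (n : ℂ) :=
    isLittleO_const_left.2 <| .inr <| by
      simpa [Function.comp_def] using tendsto_natCast_atTop_atTop (R := ℝ)
  refine hconst.right_isBigO_sub.inv_rev ?_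
  filter_upwards [eventually_ne_atTop 0] with n hn h
  exact absurd (Nat.cast_eq_zero.1 h) hn

theorem isBigO_pochNewton (s : ℂ) :
    (fun n ↦ pochNewton n s) =O[atTop] fun n : ℕ ↦ (n : ℝ) ^ (-(s.re + 1)) := by
  by_cases hs : ∃ m : ℕ, s = m
  · obtain ⟨m, rfl⟩ := hs
    refine EventuallyEq.trans_isBigO ?_ (isBigO_zero _ _)
    filter_upwards [eventually_gt_atTop m] with n hn using pochNewton_natCast_of_lt hn
  have hGamma : Complex.Gamma (-s) ≠ 0 := fun h ↦ by
    obtain ⟨m, hm⟩ := (Complex.Gamma_eq_zero_iff _).1 h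
    exact hs ⟨m, neg_injective hm⟩
  have hGammaSeq : (fun n ↦ (Complex.GammaSeq (-s) n)⁻¹) =O[atTop] fun _ ↦ (1 : ℂ) :=
    ((Complex.GammaSeq_tendsto_Gamma (-s)).inv₀ hGamma).isBigO_one ℂ
  have hpow : (fun n : ℕ ↦ (n : ℂ) ^ (-s) * (n : ℂ)⁻¹) =O[atTop]
      fun n : ℕ ↦ (n : ℝ) ^ (-(s.re + 1)) := by
    refine .of_norm_eventuallyLE ?_
    filter_upwards [eventually_gt_atTop 0] with n hn
    have hn' : (0 : ℝ) < n := Nat.cast_pos.2 hn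
    rw [norm_mul, Complex.norm_natCast_cpow_of_pos hn, norm_inv, Complex.norm_natCast, neg_add,
      Real.rpow_add hn', Real.rpow_neg_one, Complex.neg_re]
  have heq : (fun n ↦ pochNewton n s) =ᶠ[atTop]
      fun n : ℕ ↦ (n : ℂ) ^ (-s) * (n - s : ℂ)⁻¹ * (Complex.GammaSeq (-s) n)⁻¹ := by
    filter_upwards [eventually_ne_atTop 0] with n hn
    exact pochNewton_eq_cpow_mul_inv_GammaSeq hn fun h ↦ hs ⟨n, h⟩
  refine heq.trans_isBigO (IsBigO.trans ?_ hpow)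
  simpa only [mul_one] using
    ((isBigO_refl _ _).mul (isBigO_inv_natCast_sub s)).mul hGammaSeq

theorem summable_rpow_mul_norm_pochNewton {p : ℝ} {s : ℂ} (hp : p < s.re) :
    Summable fun n : ℕ ↦ (n : ℝ) ^ p * ‖pochNewton n s‖ := by
  refine summable_of_isBigO_nat (g := fun n : ℕ ↦ (n : ℝ) ^ (p - (s.re + 1)))
    (Real.summable_nat_rpow.2 (by linarith)) ?_
  refine ((isBigO_refl _ _).mul (isBigO_pochNewton s).norm_left).congr' .rfl ?_
  filter_upwards [eventually_gt_atTop 0] with n hn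
  rw [sub_eq_add_neg, Real.rpow_add (Nat.cast_pos.2 hn)]

theorem tendsto_pochNewton_zero {s : ℂ} (hs : -1 < s.re) :
    Tendsto (fun n ↦ pochNewton n s) atTop (𝓝 0) :=
  (isBigO_pochNewton s).trans_tendsto <|
    (tendsto_rpow_neg_atTop (by linarith)).comp tendsto_natCast_atTop_atTop

theorem hasSum_pochNewton {s : ℂ} (hs : 0 < s.re) : HasSum (fun n ↦ pochNewton n s) 0 := by
  have hsum : Summable fun n ↦ pochNewton n s := by
    have h := summable_rpow_mul_norm_pochNewton hs
    simp only [Real.rpow_zero, one_mul] at h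
    exact h.of_norm
  rw [hsum.hasSum_iff_tendsto_nat, ← tendsto_add_atTop_iff_nat 1]
  simp only [sum_range_pochNewton]
  exact tendsto_pochNewton_zero (by simpa using hs)

theorem hasSum_pochNewton_natCast_mul_pochNewton {k : ℕ} {s : ℂ} (hk : k < s.re) :
    HasSum (fun n : ℕ ↦ pochNewton k n * pochNewton n s) 0 := by
  have hsmall : ∑ n ∈ range k, pochNewton k n * pochNewton n s = 0 :=
    sum_eq_zero fun n hn ↦ by rw [pochNewton_natCast_of_lt (mem_range.1 hn), zero_mul]
  rw [← hasSum_nat_add_iff' k, hsmall, sub_zero]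
  simp only [pochNewton_natCast_add_mul_pochNewton]
  simpa using (hasSum_pochNewton (s := s - k) (by simpa using hk)).mul_left _

theorem hasSum_sum_range_pochNewton_natCast_mul_pochNewton (f : ℕ → ℂ) {d : ℕ} {s : ℂ}
    (hd : d < s.re + 1) :
    HasSum (fun n : ℕ ↦ (∑ k ∈ range d, pochNewton k n * f k) * pochNewton n s) 0 := by
  have h : ∀ k ∈ range d, HasSum (fun n : ℕ ↦ pochNewton k n * f k * pochNewton n s) 0 := by
    intro k hk
    have hkd : (k + 1 : ℝ) ≤ d := mod_cast mem_range.1 hk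
    simpa [mul_right_comm] using
      (hasSum_pochNewton_natCast_mul_pochNewton (k := k) (s := s) (by linarith)).mul_right (f k)
  simpa [sum_mul] using hasSum_sum h

end PochNewton

section BinomialRemainder

/-- The remainder of the binomial expansion of `(1 - x) ^ n` after its terms of degree less
than `d`. -/
noncomputable def binomialRemainder (d n : ℕ) (x : ℂ) : ℂ :=
  (1 - x) ^ n - ∑ k ∈ range d, pochNewton k n * x ^ k

theorem binomialRemainder_eq_sum_Ico (d n : ℕ) (x : ℂ) :
    binomialRemainder d n x = ∑ k ∈ Ico d (n + 1), pochNewton k n * x ^ k := by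
  rw [binomialRemainder, one_sub_pow_eq_sum_pochNewton, sum_range_pochNewton_natCast_mul _ d,
    add_sub_cancel_left]

theorem binomialRemainder_apply_zero {d : ℕ} (hd : d ≠ 0) (n : ℕ) :
    binomialRemainder d n 0 = 0 := by
  rw [binomialRemainder_eq_sum_Ico]
  refine sum_eq_zero fun k hk ↦ ?_
  rw [zero_pow (by grind), mul_zero]

theorem binomialRemainder_succ_left (d n : ℕ) (x : ℂ) :
    binomialRemainder (d + 1) n x = binomialRemainder d n x - pochNewton d n * x ^ d := by
  rw [binomialRemainder, binomialRemainder, sum_range_succ, sub_add_eq_sub_sub]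

theorem binomialRemainder_succ_succ (d n : ℕ) (x : ℂ) :
    binomialRemainder (d + 1) (n + 1) x =
      binomialRemainder (d + 1) n x - x * binomialRemainder d n x := by
  induction d with
  | zero =>
    simp only [binomialRemainder, zero_add, range_zero, sum_empty, sum_range_one,
      pochNewton_zero, pow_zero]
    ring
  | succ d ih =>
    rw [binomialRemainder_succ_left _ (n + 1), ih, binomialRemainder_succ_left (d + 1) n,
      binomialRemainder_succ_left d n, Nat.cast_succ, pochNewton_succ_add_one]
    ring

theorem norm_binomialRemainder_le_choose_mul_pow {x : ℂ} (hx : ‖1 - x‖ ≤ 1) (d n : ℕ) :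
    ‖binomialRemainder d n x‖ ≤ n.choose d * ‖x‖ ^ d := by
  induction n generalizing d with
  | zero => cases d <;> simp [binomialRemainder_eq_sum_Ico]
  | succ n ih =>
    cases d with
    | zero => simpa [binomialRemainder] using pow_le_one₀ (norm_nonneg _) hx
    | succ d =>
      rw [binomialRemainder_succ_succ]
      calc ‖binomialRemainder (d + 1) n x - x * binomialRemainder d n x‖
          ≤ ‖binomialRemainder (d + 1) n x‖ + ‖x‖ * ‖binomialRemainder d n x‖ := by
            rw [← norm_mul]; exact norm_sub_le _ _
        _ ≤ n.choose (d + 1) * ‖x‖ ^ (d + 1) + ‖x‖ * (n.choose d * ‖x‖ ^ d) := by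
            gcongr <;> exact ih _
        _ = (n + 1).choose (d + 1) * ‖x‖ ^ (d + 1) := by
            rw [Nat.choose_succ_succ]; push_cast; ring

theorem norm_binomialRemainder_le_pow {x : ℂ} (hx : ‖1 - x‖ ≤ 1) (d n : ℕ) :
    ‖binomialRemainder d n x‖ ≤ (n * ‖x‖) ^ d := by
  refine (norm_binomialRemainder_le_choose_mul_pow hx d n).trans ?_
  rw [mul_pow]
  gcongr
  exact_mod_cast Nat.choose_le_pow n d

theorem norm_binomialRemainder_succ_le_two_mul_pow {x : ℂ} (hx : ‖1 - x‖ ≤ 1) (d n : ℕ) :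
    ‖binomialRemainder (d + 1) n x‖ ≤ 2 * (n * ‖x‖) ^ d := by
  have hterm : ‖pochNewton d n * x ^ d‖ ≤ (n * ‖x‖) ^ d := by
    rw [pochNewton_natCast, norm_mul, norm_mul, norm_pow, norm_pow, norm_neg, norm_one, one_pow,
      one_mul, Complex.norm_natCast, mul_pow]
    gcongr
    exact_mod_cast Nat.choose_le_pow n d
  rw [binomialRemainder_succ_left, two_mul]
  exact (norm_sub_le _ _).trans (add_le_add (norm_binomialRemainder_le_pow hx d n) hterm)

theorem norm_binomialRemainder_succ_le_two_mul_rpow {x : ℂ} (hx : ‖1 - x‖ ≤ 1) {d : ℕ} {p : ℝ}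
    (hdp : d ≤ p) (hpd : p ≤ d + 1) (n : ℕ) :
    ‖binomialRemainder (d + 1) n x‖ ≤ 2 * (n * ‖x‖) ^ p := by
  have ht : 0 ≤ n * ‖x‖ := by positivity
  rcases le_total (n * ‖x‖) 1 with h | h
  · calc ‖binomialRemainder (d + 1) n x‖ ≤ (n * ‖x‖) ^ (d + 1) :=
          norm_binomialRemainder_le_pow hx _ _
      _ ≤ (n * ‖x‖) ^ p := by
          rw [← Real.rpow_natCast]
          have hp : 0 ≤ p := d.cast_nonneg.trans hdp
          exact Real.rpow_le_rpow_of_exponent_ge' ht h hp (by simpa using hpd)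
      _ ≤ 2 * (n * ‖x‖) ^ p := le_mul_of_one_le_left (by positivity) one_le_two
  · refine (norm_binomialRemainder_succ_le_two_mul_pow hx d n).trans ?_
    rw [← Real.rpow_natCast]
    gcongr

theorem hasSum_binomialRemainder_mul_pochNewton {x : ℂ} (hx : ‖1 - x‖ < 1) {d : ℕ} {s : ℂ}
    (hd : d < s.re + 1) :
    HasSum (fun n ↦ binomialRemainder d n x * pochNewton n s) (x ^ s) := by
  simpa [binomialRemainder, sub_mul] using (hasSum_pow_mul_pochNewton hx s).sub
    (hasSum_sum_range_pochNewton_natCast_mul_pochNewton (x ^ ·) hd)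

end BinomialRemainder

section DirichletSeries

theorem norm_one_sub_inv_natCast (m : ℕ) : ‖1 - (m : ℂ)⁻¹‖ = 1 - (m : ℝ)⁻¹ := by
  have h : 1 - (m : ℂ)⁻¹ = ((1 - (m : ℝ)⁻¹ : ℝ) : ℂ) := by push_cast; rfl
  rw [h, Complex.norm_of_nonneg (sub_nonneg.2 (Nat.cast_inv_le_one m))]

variable {a : ℕ → ℂ} {d : ℕ} {p : ℝ} {s : ℂ}

theorem hasSum_mul_binomialRemainder_inv (hd : d ≠ 0) (ha : LSeriesSummable a d) (n : ℕ) :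
    HasSum (fun m : ℕ ↦ a m * binomialRemainder d n (m : ℂ)⁻¹)
      (∑ k ∈ Ico d (n + 1), pochNewton k n * LSeries a k) := by
  simp only [binomialRemainder_eq_sum_Ico, mul_sum]
  refine hasSum_sum fun k hk ↦ ?_
  have hdk : d ≤ k := (mem_Ico.1 hk).1
  have hsum : LSeriesSummable a k := ha.of_re_le_re (by simpa using hdk)
  have hk0 : (k : ℂ) ≠ 0 := Nat.cast_ne_zero.2 (by lia)
  refine (hsum.LSeriesHasSum.mul_left (pochNewton k n)).congr_fun fun m ↦ ?_
  rw [LSeries.term_of_ne_zero' hk0, Complex.cpow_natCast, div_eq_mul_inv, inv_pow, mul_left_comm]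

variable (a) in
theorem hasSum_mul_binomialRemainder_inv_mul_pochNewton (hd : d ≠ 0) (hds : d < s.re + 1)
    (m : ℕ) :
    HasSum (fun n : ℕ ↦ a m * binomialRemainder d n (m : ℂ)⁻¹ * pochNewton n s)
      (LSeries.term a s m) := by
  rcases eq_or_ne m 0 with rfl | hm
  · simp [binomialRemainder_apply_zero hd]
  have hx : ‖1 - (m : ℂ)⁻¹‖ < 1 := by
    rw [norm_one_sub_inv_natCast]
    exact sub_lt_self _ (by positivity)
  have harg : (m : ℂ).arg ≠ Real.pi := by rw [Complex.natCast_arg]; exact Real.pi_ne_zero.symm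
  have h := (hasSum_binomialRemainder_mul_pochNewton hx hds).mul_left (a m)
  rw [Complex.inv_cpow _ _ harg, ← div_eq_mul_inv, ← LSeries.term_of_ne_zero hm] at h
  simpa only [mul_assoc] using h

theorem summable_mul_binomialRemainder_inv_mul_pochNewton (hdp : d ≤ p) (hpd : p ≤ d + 1)
    (ha : LSeriesSummable a p) (hs : p < s.re) :
    Summable fun q : ℕ × ℕ ↦
      a q.2 * binomialRemainder (d + 1) q.1 (q.2 : ℂ)⁻¹ * pochNewton q.1 s := by
  have hmajorant := ((summable_rpow_mul_norm_pochNewton hs).mul_left 2).mul_of_nonneg ha.norm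
    (fun n ↦ by positivity) (fun m ↦ norm_nonneg _)
  refine hmajorant.of_norm_bounded fun ⟨n, m⟩ ↦ ?_
  rcases eq_or_ne m 0 with rfl | hm
  · simp [binomialRemainder_apply_zero]
  have hx : ‖1 - (m : ℂ)⁻¹‖ ≤ 1 := by
    rw [norm_one_sub_inv_natCast]
    exact sub_le_self _ (by positivity)
  calc ‖a m * binomialRemainder (d + 1) n (m : ℂ)⁻¹ * pochNewton n s‖
      ≤ ‖a m‖ * (2 * (n * ‖(m : ℂ)⁻¹‖) ^ p) * ‖pochNewton n s‖ := by
        rw [norm_mul, norm_mul]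
        gcongr
        exact norm_binomialRemainder_succ_le_two_mul_rpow hx hdp hpd n
    _ = 2 * (n ^ p * ‖pochNewton n s‖) * ‖LSeries.term a p m‖ := by
        rw [LSeries.norm_term_eq, if_neg hm, Complex.ofReal_re, norm_inv, Complex.norm_natCast,
          Real.mul_rpow n.cast_nonneg (by positivity), Real.inv_rpow m.cast_nonneg]
        ring

theorem newton_series_recip_zeta_general {w : ℕ → ℂ} (hp : 0 ≤ p) (ha : LSeriesSummable a p)
    (hw : ∀ k : ℕ, p < k → w k = LSeries a k) (hs : p < s.re) :
    HasSum (fun n : ℕ ↦ (∑ k ∈ range (n + 1), pochNewton k n * w k) * pochNewton n s)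
      (LSeries a s) := by
  set d := ⌊p⌋₊
  have hdp : d ≤ p := Nat.floor_le hp
  have hpd : p < d + 1 := Nat.lt_floor_add_one p
  have hds : ((d + 1 : ℕ) : ℝ) < s.re + 1 := by push_cast; linarith
  have had : LSeriesSummable a (d + 1 : ℕ) := ha.of_re_le_re (by simpa using hpd.le)
  have hdouble := (summable_mul_binomialRemainder_inv_mul_pochNewton hdp hpd.le ha hs).hasSum
  have hrows := hdouble.prod_fiberwise fun n ↦
    (hasSum_mul_binomialRemainder_inv d.succ_ne_zero had n).mul_right (pochNewton n s)
  have hcols := ((Equiv.prodComm ℕ ℕ).hasSum_iff.2 hdouble).prod_fiberwise fun m ↦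
    hasSum_mul_binomialRemainder_inv_mul_pochNewton a d.succ_ne_zero hds m
  have hvalue : _ = LSeries a s := hcols.tsum_eq.symm
  rw [hvalue] at hrows
  have htotal := (hasSum_sum_range_pochNewton_natCast_mul_pochNewton w hds).add hrows
  rw [zero_add] at htotal
  refine htotal.congr_fun fun n ↦ ?_
  have hcoeff : ∀ k ∈ Ico (d + 1) (n + 1), pochNewton k n * w k = pochNewton k n * LSeries a k :=
    fun k hk ↦ by rw [hw k ((Nat.floor_lt hp).1 (mem_Ico.1 hk).1)]
  rw [sum_range_pochNewton_natCast_mul w (d + 1), sum_congr rfl hcoeff, add_mul]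

end DirichletSeries

open scoped ArithmeticFunction.Moebius in
theorem LSeries_moebius_eq_inv_riemannZeta {s : ℂ} (hs : 1 < s.re) :
    LSeries (fun n ↦ (μ n : ℂ)) s = (riemannZeta s)⁻¹ := by
  rw [← ArithmeticFunction.LSeries_zeta_eq_riemannZeta hs]
  exact eq_inv_of_mul_eq_one_right (ArithmeticFunction.LSeries_zeta_mul_Lseries_moebius hs)

/-- Newton interpolation of the reciprocal Riemann zeta function: for `Re s > 1`, the
Newton series `∑_{n} (∑_{k=0}^n P_k(n) w(k)) P_n(s)` converges to `1/ζ(s)`. -/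
theorem newton_series_recip_zeta (s : ℂ) (hs : 1 < s.re) :
    Tendsto (fun N : ℕ => ∑ n ∈ Finset.range N,
        (∑ k ∈ Finset.range (n + 1), pochNewton k (n : ℂ) * recipZetaValue k) *
          pochNewton n s)
      atTop (𝓝 (riemannZeta s)⁻¹) := by
  obtain ⟨p, hp, hps⟩ := exists_between hs
  rw [← LSeries_moebius_eq_inv_riemannZeta hs]
  refine (newton_series_recip_zeta_general (by linarith)
    (ArithmeticFunction.LSeriesSummable_moebius_iff.2 (by simpa)) (fun k hk ↦ ?_)
    hps).tendsto_sum_nat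
  have hk1 : 1 < k := Nat.one_lt_cast.1 (hp.trans hk)
  rw [recipZetaValue, if_neg hk1.ne', LSeries_moebius_eq_inv_riemannZeta (by simpa)]
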